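/- Let A be an n×n Hermitian positive definite matrix and C an n×n Hermitian matrix. Define T = ∫_0^∞ (A+τI)^{−1} C (A+τI)^{−1} dτ and R = 2∫_0^∞ (A+τI)^{−1} C (A+τI)^{−1} C (A+τI)^{−1} dτ. Then for any nonnegative real numbers b_1,…,b_n: Σ_{i=1}^n R_{ii} b_i ≥ ∫_0^1 Σ_{i=1}^n Σ_{j=1}^n T_{ij} b_j^s T_{ji} b_i^{1−s} ds. -/

import Mathlib

open Matrix MeasureTheory Finset ProbabilityTheory
open scoped Classical ComplexOrder

/-- `f` is integrable on `(0,∞)` with integral `v`. -/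
def HI {E : Type*} [NormedAddCommGroup E] [NormedSpace ℝ E] (f : ℝ → E) (v : E) : Prop :=
  IntegrableOn f (Set.Ioi (0 : ℝ)) ∧ ∫ t in Set.Ioi (0 : ℝ), f t = v

namespace HI
variable {E : Type*} [NormedAddCommGroup E] [NormedSpace ℝ E]

theorem congr {f g : ℝ → E} {v w : E} (h : HI f v) (hfg : ∀ t, 0 < t → f t = g t)
    (hvw : v = w) : HI g w := by
  subst hvw
  refine ⟨h.1.congr_fun (fun t ht => hfg t ht) measurableSet_Ioi, ?_⟩
  rw [← h.2]
  exact (setIntegral_congr_fun measurableSet_Ioi (fun t ht => hfg t ht)).symm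

theorem sum {ι : Type*} {s : Finset ι} {f : ι → ℝ → E} {v : ι → E} (h : ∀ i, HI (f i) (v i)) :
    HI (fun t => ∑ i ∈ s, f i t) (∑ i ∈ s, v i) := by
  refine ⟨integrable_finsetSum s (fun i _ => (h i).1), ?_⟩
  rw [integral_finsetSum s (fun i _ => (h i).1)]
  exact Finset.sum_congr rfl (fun i _ => (h i).2)

theorem add {f g : ℝ → E} {v w : E} (h : HI f v) (h' : HI g w) :
    HI (fun t => f t + g t) (v + w) :=
  ⟨Integrable.add h.1 h'.1, by rw [← h.2, ← h'.2]; exact integral_add h.1 h'.1⟩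

theorem const_mul {f : ℝ → ℂ} {v : ℂ} (c : ℂ) (h : HI f v) : HI (fun t => c * f t) (c * v) :=
  ⟨Integrable.const_mul h.1 c, by rw [← h.2]; exact integral_const_mul c _⟩

theorem const_mulR {f : ℝ → ℝ} {v : ℝ} (c : ℝ) (h : HI f v) : HI (fun t => c * f t) (c * v) :=
  ⟨Integrable.const_mul h.1 c, by rw [← h.2]; exact integral_const_mul c _⟩

theorem ofReal {f : ℝ → ℝ} {v : ℝ} (h : HI f v) : HI (fun t => (f t : ℂ)) (v : ℂ) :=
  ⟨Integrable.ofReal h.1, by rw [← h.2]; exact integral_ofReal⟩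

theorem re {f : ℝ → ℂ} {v : ℂ} (h : HI f v) : HI (fun t => (f t).re) v.re :=
  ⟨Integrable.re h.1, by rw [← h.2]; exact integral_re h.1⟩

theorem mono {f g : ℝ → ℝ} {v w : ℝ} (h : HI f v) (h' : HI g w) (hfg : ∀ t, 0 < t → f t ≤ g t) :
    v ≤ w := by
  rw [← h.2, ← h'.2]
  exact setIntegral_mono_on h.1 h'.1 measurableSet_Ioi (fun t ht => hfg t ht)

theorem scale {f : ℝ → ℝ} {v y : ℝ} (hy : 0 < y) (h : HI f v) : HI (fun t => y * f (y * t)) v := by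
  constructor
  · have := (integrableOn_Ioi_comp_mul_left_iff f 0 hy).2 (by simpa using h.1)
    exact Integrable.const_mul this y
  · rw [integral_const_mul, integral_comp_mul_left_Ioi f 0 hy, mul_zero, h.2, smul_eq_mul]
    field_simp

theorem invert {f : ℝ → ℝ} {v : ℝ} (h : HI f v) : HI (fun t => (t ^ 2)⁻¹ * f t⁻¹) v := by
  have h1 : HI (fun x : ℝ => (|(-1 : ℝ)| * x ^ ((-1 : ℝ) - 1)) • f (x ^ (-1 : ℝ))) v :=
    ⟨(integrableOn_Ioi_comp_rpow_iff f (by norm_num)).2 h.1,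
      by rw [integral_comp_rpow_Ioi f (by norm_num), h.2]⟩
  refine h1.congr (fun t ht => ?_) rfl
  rw [Real.rpow_neg_one, show ((-1 : ℝ) - 1) = -(2 : ℕ) by norm_num, Real.rpow_neg ht.le,
    Real.rpow_natCast]
  simp
end HI

theorem HI_sq {m : ℝ} (hm : 0 < m) : HI (fun t : ℝ => 1 / ((m + t) * (m + t))) (1 / m) := by
  have hd : ∀ x ∈ Set.Ici (0 : ℝ),
      HasDerivAt (fun t : ℝ => -(m + t)⁻¹) (1 / ((m + x) * (m + x))) x := by
    intro x hx
    have hx : (0 : ℝ) ≤ x := hx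
    have h := (((hasDerivAt_id x).const_add m).inv (by simp; positivity)).neg
    refine HasDerivAt.congr_deriv (f := fun t : ℝ => -(m + t)⁻¹) h ?_
    simp only [id]
    field_simp
  have hn : ∀ x ∈ Set.Ioi (0 : ℝ), (0 : ℝ) ≤ 1 / ((m + x) * (m + x)) := fun x hx =>
    div_nonneg zero_le_one (mul_self_nonneg _)
  have ht : Filter.Tendsto (fun t : ℝ => -(m + t)⁻¹) Filter.atTop (nhds 0) := by
    have := (tendsto_inv_atTop_zero.comp
      (Filter.tendsto_atTop_add_const_left Filter.atTop m Filter.tendsto_id)).neg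
    simpa using this
  exact ⟨integrableOn_Ioi_deriv_of_nonneg' hd hn ht,
    by rw [integral_Ioi_of_hasDerivAt_of_nonneg' hd hn ht]; simp⟩

theorem HI_of_bound {f : ℝ → ℝ} {m K : ℝ} (hm : 0 < m) (hf : Measurable f)
    (hb : ∀ t, 0 < t → |f t| ≤ K * (1 / ((m + t) * (m + t)))) :
    HI f (∫ t in Set.Ioi (0 : ℝ), f t) := by
  refine ⟨?_, rfl⟩
  refine Integrable.mono' (((HI_sq hm).const_mulR K).1) hf.aestronglyMeasurable ?_
  exact (ae_restrict_iff' measurableSet_Ioi).2 (Filter.Eventually.of_forall fun t ht => hb t ht)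

/-- The pair integral. -/
noncomputable def PI (x y : ℝ) : ℝ := ∫ t in Set.Ioi (0 : ℝ), 1 / ((x + t) * (y + t))
/-- The triple integral. -/
noncomputable def QI (x y z : ℝ) : ℝ :=
  ∫ t in Set.Ioi (0 : ℝ), 1 / ((x + t) * (y + t) * (z + t))

theorem HI_P {x y : ℝ} (hx : 0 < x) (hy : 0 < y) :
    HI (fun t : ℝ => 1 / ((x + t) * (y + t))) (PI x y) := by
  refine HI_of_bound (m := min x y) (K := 1) (lt_min hx hy) (by fun_prop) (fun t ht => ?_)
  have hm : 0 < min x y := lt_min hx hy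
  rw [abs_of_pos (by positivity), one_mul]
  gcongr
  · exact min_le_left _ _
  · exact min_le_right _ _

theorem HI_Q {x y z : ℝ} (hx : 0 < x) (hy : 0 < y) (hz : 0 < z) :
    HI (fun t : ℝ => 1 / ((x + t) * (y + t) * (z + t))) (QI x y z) := by
  refine HI_of_bound (m := min x y) (K := 1 / z) (lt_min hx hy) (by fun_prop) (fun t ht => ?_)
  have hm : 0 < min x y := lt_min hx hy
  rw [abs_of_pos (by positivity), one_div_mul_one_div, mul_comm z]
  gcongr
  · exact min_le_left _ _
  · exact min_le_right _ _
  · linarith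

theorem HI_P1 {x y : ℝ} (hx : 0 < x) (hy : 0 < y) :
    HI (fun t : ℝ => 1 / (x + t * y) / (1 + t)) (PI x y) := by
  refine ((HI_P hx hy).scale hy).congr (fun t ht => ?_) rfl
  field_simp

theorem HI_Q1 {x y z : ℝ} (hx : 0 < x) (hy : 0 < y) (hz : 0 < z) :
    HI (fun t : ℝ => 1 / ((x + t * y) * (z + t * y)) / (1 + t)) (QI x y z) := by
  refine ((HI_Q hx hy hz).scale hy).congr (fun t ht => ?_) rfl
  field_simp

theorem HI_Q2 {x y z : ℝ} (hx : 0 < x) (hy : 0 < y) (hz : 0 < z) :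
    HI (fun t : ℝ => t * (1 / ((y + t * x) * (y + t * z))) / (1 + t)) (QI x y z) := by
  refine ((HI_Q1 hx hy hz).invert).congr (fun t ht => ?_) rfl
  have h1 : x + t⁻¹ * y = (y + t * x) / t := by field_simp; ring
  have h2 : z + t⁻¹ * y = (y + t * z) / t := by field_simp; ring
  have h3 : 1 + t⁻¹ = (1 + t) / t := by field_simp; ring
  rw [h1, h2, h3]
  field_simp

theorem PI_eq {b c : ℝ} (hb : 0 < b) (hc : 0 < c) (h : b ≠ c) :
    PI b c = (Real.log c - Real.log b) / (c - b) := by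
  have hcb : c - b ≠ 0 := sub_ne_zero.2 h.symm
  have hd : ∀ x ∈ Set.Ici (0 : ℝ),
      HasDerivAt (fun t : ℝ => Real.log ((b + t) / (c + t)) / (c - b))
        (1 / ((b + x) * (c + x))) x := by
    intro x hx
    have hx : (0 : ℝ) ≤ x := hx
    have h1 := ((hasDerivAt_id x).const_add b).div ((hasDerivAt_id x).const_add c)
      (by simp; positivity)
    have h2 := (h1.log (by simp; constructor <;> positivity)).div_const (c - b)
    refine HasDerivAt.congr_deriv
      (f := fun t : ℝ => Real.log ((b + t) / (c + t)) / (c - b)) h2 ?_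
    simp only [id, Pi.div_apply]
    have : b + x ≠ 0 := by positivity
    have : c + x ≠ 0 := by positivity
    field_simp
    ring
  have ht : Filter.Tendsto (fun t : ℝ => Real.log ((b + t) / (c + t)) / (c - b))
      Filter.atTop (nhds 0) := by
    have h0 : Filter.Tendsto (fun t : ℝ => (c + t)⁻¹) Filter.atTop (nhds 0) :=
      tendsto_inv_atTop_zero.comp
        (Filter.tendsto_atTop_add_const_left Filter.atTop c Filter.tendsto_id)
    have h1 : Filter.Tendsto (fun t : ℝ => 1 + (b - c) * (c + t)⁻¹) Filter.atTop (nhds 1) := by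
      simpa using (h0.const_mul (b - c)).const_add 1
    have h2 : Filter.Tendsto (fun t : ℝ => (b + t) / (c + t)) Filter.atTop (nhds 1) := by
      refine h1.congr' ?_
      filter_upwards [Filter.eventually_gt_atTop 0] with t ht
      field_simp
      ring
    have h3 := (h2.log one_ne_zero).div_const (c - b)
    simpa using h3
  unfold PI
  rw [integral_Ioi_of_hasDerivAt_of_tendsto' hd (HI_P hb hc).1 ht]
  simp only [add_zero]
  rw [Real.log_div hb.ne' hc.ne']
  ring

theorem logmean_eq {b c : ℝ} (hb : 0 < b) (hc : 0 < c) :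
    PI b c * ∫ s in (0 : ℝ)..1, c ^ s * b ^ (1 - s) = 1 := by
  by_cases h : b = c
  · subst h
    have : ∀ s : ℝ, b ^ s * b ^ (1 - s) = b := fun s => by
      rw [← Real.rpow_add hb]; simp
    simp only [this]
    rw [show PI b b = 1 / b from (HI_sq hb).2]
    simp; field_simp
  · have hl : Real.log c - Real.log b ≠ 0 := fun h0 =>
      h (Real.log_injOn_pos hb hc (by linarith))
    have hcb : c - b ≠ 0 := sub_ne_zero.2 (Ne.symm h)
    have hf : (fun s : ℝ => c ^ s * b ^ (1 - s)) =
        fun s : ℝ => b * Real.exp ((Real.log c - Real.log b) * s) := by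
      funext s
      rw [Real.rpow_def_of_pos hc, Real.rpow_def_of_pos hb, ← Real.exp_add]
      conv_rhs => rw [← Real.exp_log hb, ← Real.exp_add, Real.exp_log hb]
      congr 1; ring
    rw [hf, intervalIntegral.integral_eq_sub_of_hasDerivAt
      (f := fun s : ℝ => b * Real.exp ((Real.log c - Real.log b) * s) / (Real.log c - Real.log b))]
    · rw [PI_eq hb hc h]
      simp only [mul_one, mul_zero, Real.exp_zero, Real.exp_sub, Real.exp_log hb, Real.exp_log hc]
      field_simp
    · intro x _
      have := ((((hasDerivAt_id x).const_mul (Real.log c - Real.log b)).exp).const_mul b).div_const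
        (Real.log c - Real.log b)
      refine HasDerivAt.congr_deriv (f := fun s : ℝ => b * Real.exp ((Real.log c - Real.log b) * s)
        / (Real.log c - Real.log b)) this ?_
      simp only [id]
      field_simp
    · exact (by fun_prop : Continuous _).intervalIntegrable _ _

theorem logmean_zero {b c : ℝ} (hb : 0 ≤ b) (hc : 0 ≤ c) (h : ¬ (0 < b ∧ 0 < c)) :
    Set.EqOn (fun _ : ℝ => (0 : ℝ)) (fun s : ℝ => c ^ s * b ^ (1 - s)) (Set.Ioo 0 1) := by
  intro s hs
  rcases hb.eq_or_lt with h0 | h0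
  · subst h0
    simp [Real.zero_rpow (sub_ne_zero.2 hs.2.ne')]
  · rcases hc.eq_or_lt with h1 | h1
    · subst h1
      simp [Real.zero_rpow hs.1.ne']
    · exact absurd ⟨h0, h1⟩ h

theorem logmean_cases {b c : ℝ} (hb : 0 ≤ b) (hc : 0 ≤ c) :
    IntervalIntegrable (fun s : ℝ => c ^ s * b ^ (1 - s)) volume 0 1 ∧
      (∫ s in (0 : ℝ)..1, c ^ s * b ^ (1 - s) = 0 ∨
        (0 < b ∧ 0 < c ∧ PI b c * ∫ s in (0 : ℝ)..1, c ^ s * b ^ (1 - s) = 1)) := by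
  by_cases h : 0 < b ∧ 0 < c
  · refine ⟨?_, Or.inr ⟨h.1, h.2, logmean_eq h.1 h.2⟩⟩
    apply Continuous.intervalIntegrable
    have := h.1.ne'
    have := h.2.ne'
    exact (Real.continuous_const_rpow this).mul
      ((Real.continuous_const_rpow h.1.ne').comp (by fun_prop))
  · have he := logmean_zero hb hc h
    constructor
    · rw [intervalIntegrable_iff_integrableOn_Ioo_of_le zero_le_one]
      exact (integrableOn_zero).congr_fun he measurableSet_Ioo
    · left
      rw [intervalIntegral.integral_of_le zero_le_one, integral_Ioc_eq_integral_Ioo,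
        ← setIntegral_congr_fun measurableSet_Ioo he]
      simp

/-- Pointwise quadratic bound. -/
theorem quad_bound (w d : ℂ) {y : ℝ} (hy : 0 < y) :
    2 * (star d * w).re - Complex.normSq d * (1 / y) ≤ Complex.normSq w * y := by
  have h : 0 ≤ ((y * w.re - d.re) ^ 2 + (y * w.im - d.im) ^ 2) / y := by positivity
  have e : ((y * w.re - d.re) ^ 2 + (y * w.im - d.im) ^ 2) / y =
      Complex.normSq w * y - (2 * (star d * w).re - Complex.normSq d * (1 / y)) := by
    simp [Complex.normSq_apply]
    field_simp
    ring
  linarith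

theorem conj_entry {n : ℕ} (U M : Matrix (Fin n) (Fin n) ℂ) (i j : Fin n) :
    (U * M * Uᴴ) i j = ∑ k, ∑ l, (U i k * star (U j l)) * M k l := by
  simp only [Matrix.mul_apply, Matrix.conjTranspose_apply, Finset.sum_mul]
  rw [Finset.sum_comm]
  refine Finset.sum_congr rfl fun k _ => Finset.sum_congr rfl fun l _ => by ring

theorem HI_conj {n : ℕ} (U : Matrix (Fin n) (Fin n) ℂ) {M : ℝ → Matrix (Fin n) (Fin n) ℂ}
    {N : Matrix (Fin n) (Fin n) ℂ} (h : ∀ k l, HI (fun t => M t k l) (N k l)) (i j : Fin n) :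
    HI (fun t => (U * M t * Uᴴ) i j) ((U * N * Uᴴ) i j) := by
  simp only [conj_entry]
  exact HI.sum fun k => HI.sum fun l => (h k l).const_mul _

theorem lieb_core {n : ℕ} (U Cp : Matrix (Fin n) (Fin n) ℂ) (hU : Uᴴ * U = 1)
    (hCp : Cpᴴ = Cp) (a : Fin n → ℝ) (ha : ∀ i, 0 < a i)
    (T R : Matrix (Fin n) (Fin n) ℂ)
    (hT : T = U * (Matrix.of fun k l => Cp k l * (PI (a k) (a l) : ℂ)) * Uᴴ)
    (hR : R = (2 : ℂ) • (U * (Matrix.of fun k m => ∑ l, (Cp k l * Cp l m) *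
      (QI (a k) (a l) (a m) : ℂ)) * Uᴴ))
    (b : Fin n → ℝ) (hb : ∀ i, 0 ≤ b i) :
    ∫ s in (0 : ℝ)..1,
        ∑ i, ∑ j, (T i j * T j i).re * (b j ^ s) * (b i ^ (1 - s))
      ≤ ∑ i, (R i i).re * b i := by
  have hCe : ∀ k l, star (Cp k l) = Cp l k := fun k l => by
    conv_rhs => rw [← hCp]
    rfl
  have PIsymm : ∀ x y, PI x y = PI y x := fun x y => by
    unfold PI; simp only [mul_comm]
  have hTh : Tᴴ = T := by
    rw [hT]
    simp only [Matrix.conjTranspose_mul, Matrix.conjTranspose_conjTranspose, Matrix.mul_assoc]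
    congr 2
    ext k l
    simp only [Matrix.conjTranspose_apply, Matrix.of_apply, star_mul', hCe, PIsymm (a l)]
    simp
  have hTT : ∀ i j, (T i j * T j i).re = Complex.normSq (T i j) := fun i j => by
    have : T j i = star (T i j) := by
      conv_lhs => rw [← hTh]
      rfl
    rw [this, Complex.star_def, Complex.mul_conj, Complex.ofReal_re]
  set Wp : ℝ → Matrix (Fin n) (Fin n) ℂ := fun t =>
    Matrix.of fun k l => Cp k l * ((1 / (a k + t * a l) : ℝ) : ℂ) with hWp
  set V : ℝ → Matrix (Fin n) (Fin n) ℂ := fun t => U * Wp t * Uᴴ with hV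
  have hVT : ∀ i j, HI (fun t => V t i j * ((1 / (1 + t) : ℝ) : ℂ)) (T i j) := by
    intro i j
    rw [hT]
    refine (HI_conj U (M := fun t => Matrix.of fun k l =>
      Cp k l * ((1 / (a k + t * a l) / (1 + t) : ℝ) : ℂ)) (fun k l => ?_) i j).congr
        (fun t ht => ?_) rfl
    · exact ((HI_P1 (ha k) (ha l)).ofReal).const_mul _
    · simp only [hV, hWp, conj_entry, Finset.sum_mul, Matrix.of_apply]
      refine Finset.sum_congr rfl fun k _ => Finset.sum_congr rfl fun l _ => ?_
      push_cast; ring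
  set N : Matrix (Fin n) (Fin n) ℂ := U * (Matrix.of fun k m => ∑ l, (Cp k l * Cp l m) *
      (QI (a k) (a l) (a m) : ℂ)) * Uᴴ with hN
  have hUs : ∀ X Y : Matrix (Fin n) (Fin n) ℂ, (U * X * Uᴴ) * (U * Y * Uᴴ) = U * (X * Y) * Uᴴ := by
    intro X Y
    calc (U * X * Uᴴ) * (U * Y * Uᴴ) = U * X * (Uᴴ * U) * Y * Uᴴ := by
          simp only [Matrix.mul_assoc]
      _ = _ := by rw [hU]; simp only [Matrix.mul_assoc, Matrix.one_mul]
  have hVs : ∀ t, (V t)ᴴ = U * (Wp t)ᴴ * Uᴴ := fun t => by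
    simp only [hV, Matrix.conjTranspose_mul, Matrix.conjTranspose_conjTranspose, Matrix.mul_assoc]
  have h1 : ∀ i, HI (fun t => ∑ j, Complex.normSq (V t i j) * (1 / (1 + t))) (N i i).re := by
    intro i
    refine (HI_conj U (M := fun t => Matrix.of fun k m => ∑ l, (Cp k l * Cp l m) *
      ((1 / ((a k + t * a l) * (a m + t * a l)) / (1 + t) : ℝ) : ℂ))
      (fun k m => ?_) i i).re.congr (fun t ht => ?_) rfl
    · exact HI.sum (s := Finset.univ) fun l => HI.const_mul (Cp k l * Cp l m) ((HI_Q1 (ha k) (ha l) (ha m)).ofReal)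
    · have e : (∑ j, Complex.normSq (V t i j) * (1 / (1 + t)) : ℝ) =
          ((V t * (V t)ᴴ) i i * ((1 / (1 + t) : ℝ) : ℂ)).re := by
        rw [Complex.re_mul_ofReal, Matrix.mul_apply, Complex.re_sum, Finset.sum_mul]
        refine Finset.sum_congr rfl fun j _ => ?_
        rw [Matrix.conjTranspose_apply, Complex.star_def, Complex.mul_conj, Complex.ofReal_re]
      rw [e, hVs]
      simp only [hV]
      rw [hUs]
      congr 1
      simp only [conj_entry, Finset.sum_mul]
      refine Finset.sum_congr rfl fun k _ => Finset.sum_congr rfl fun m _ => ?_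
      refine Eq.trans ?_ (mul_assoc _ _ _).symm
      congr 1
      simp only [hWp, Matrix.mul_apply, Matrix.of_apply, Matrix.conjTranspose_apply, Finset.sum_mul,
        star_mul', hCe]
      refine Finset.sum_congr rfl fun l _ => ?_
      simp only [Complex.star_def, Complex.conj_ofReal]
      push_cast
      rw [← one_div_mul_one_div]
      ring
  have h2 : ∀ j, HI (fun t => ∑ i, Complex.normSq (V t i j) * (t / (1 + t))) (N j j).re := by
    intro j
    refine (HI_conj U (M := fun t => Matrix.of fun k m => ∑ l, (Cp k l * Cp l m) *
      ((t * (1 / ((a l + t * a k) * (a l + t * a m))) / (1 + t) : ℝ) : ℂ))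
      (fun k m => ?_) j j).re.congr (fun t ht => ?_) rfl
    · exact HI.sum (s := Finset.univ) fun l => HI.const_mul (Cp k l * Cp l m) ((HI_Q2 (ha k) (ha l) (ha m)).ofReal)
    · have e : (∑ i, Complex.normSq (V t i j) * (t / (1 + t)) : ℝ) =
          (((V t)ᴴ * V t) j j * ((t / (1 + t) : ℝ) : ℂ)).re := by
        rw [Complex.re_mul_ofReal, Matrix.mul_apply, Complex.re_sum, Finset.sum_mul]
        refine Finset.sum_congr rfl fun i _ => ?_
        rw [Matrix.conjTranspose_apply, Complex.star_def, mul_comm (starRingEnd ℂ _),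
          Complex.mul_conj, Complex.ofReal_re]
      rw [e, hVs]
      simp only [hV]
      rw [hUs]
      congr 1
      simp only [conj_entry, Finset.sum_mul]
      refine Finset.sum_congr rfl fun k _ => Finset.sum_congr rfl fun m _ => ?_
      refine Eq.trans ?_ (mul_assoc _ _ _).symm
      congr 1
      simp only [hWp, Matrix.mul_apply, Matrix.of_apply, Matrix.conjTranspose_apply, Finset.sum_mul,
        star_mul', hCe]
      refine Finset.sum_congr rfl fun l _ => ?_
      simp only [Complex.star_def, Complex.conj_ofReal]
      push_cast
      rw [← one_div_mul_one_div]
      ring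
  have hRN : ∀ i, (R i i).re = (N i i).re + (N i i).re := fun i => by
    rw [hR]; simp; ring
  set m : Fin n → Fin n → ℝ := fun i j => ∫ s in (0 : ℝ)..1, b j ^ s * b i ^ (1 - s) with hm
  have hlhs : ∫ s in (0 : ℝ)..1, ∑ i, ∑ j, (T i j * T j i).re * (b j ^ s) * (b i ^ (1 - s)) =
      ∑ i, ∑ j, Complex.normSq (T i j) * m i j := by
    simp only [mul_assoc]
    rw [intervalIntegral.integral_finsetSum]
    · refine Finset.sum_congr rfl fun i _ => ?_
      rw [intervalIntegral.integral_finsetSum]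
      · refine Finset.sum_congr rfl fun j _ => ?_
        rw [intervalIntegral.integral_const_mul, ← hTT]
      · intro j _
        exact ((logmean_cases (hb i) (hb j)).1).const_mul _
    · intro i _
      have := IntervalIntegrable.sum (μ := volume) (a := (0 : ℝ)) (b := 1) Finset.univ
        (f := fun j s => (T i j * T j i).re * (b j ^ s * b i ^ (1 - s)))
        (fun j _ => ((logmean_cases (hb i) (hb j)).1).const_mul _)
      refine this.congr_ae (Filter.Eventually.of_forall fun s => ?_)
      simp
  rw [hlhs]
  -- lower function
  have hlow : HI (fun t => ∑ i, ∑ j, if 0 < b i ∧ 0 < b j then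
      2 * ((star ((m i j : ℂ) * T i j)) * (V t i j * ((1 / (1 + t) : ℝ) : ℂ))).re +
        (- Complex.normSq ((m i j : ℂ) * T i j)) * (1 / (b i + t * b j) / (1 + t)) else 0)
      (∑ i, ∑ j, Complex.normSq (T i j) * m i j) := by
    refine HI.sum fun i => HI.sum fun j => ?_
    rcases (logmean_cases (hb i) (hb j)).2 with h0 | ⟨hi, hj, h0⟩
    · have hmz : m i j = 0 := h0
      rw [hmz]
      simp [HI]
    · have hm1 : PI (b i) (b j) * m i j = 1 := h0
      simp only [hi, hj, and_self, if_true]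
      refine (((((hVT i j).const_mul (star ((m i j : ℂ) * T i j))).re).const_mulR 2).add
        ((HI_P1 hi hj).const_mulR (- Complex.normSq ((m i j : ℂ) * T i j)))).congr
        (fun t _ => rfl) ?_
      have e1 : (star ((m i j : ℂ) * T i j) * T i j).re = m i j * Complex.normSq (T i j) := by
        simp [Complex.normSq_apply]; ring
      rw [e1, Complex.normSq_mul, Complex.normSq_ofReal]
      linear_combination (-(m i j * Complex.normSq (T i j))) * hm1
  have hhigh : HI (fun t => ∑ i, ∑ j,
      Complex.normSq (V t i j) * (b i + t * b j) * (1 / (1 + t))) (∑ i, (R i i).re * b i) := by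
    refine ((HI.sum (s := Finset.univ) fun i => (h1 i).const_mulR (b i)).add
      (HI.sum (s := Finset.univ) fun i => (h2 i).const_mulR (b i))).congr (fun t _ => ?_) ?_
    · simp only [Finset.mul_sum]
      rw [Finset.sum_comm (f := fun i j => b i * (Complex.normSq (V t j i) * (t / (1 + t)))),
        ← Finset.sum_add_distrib]
      refine Finset.sum_congr rfl fun i _ => ?_
      rw [← Finset.sum_add_distrib]
      refine Finset.sum_congr rfl fun j _ => ?_
      ring
    · rw [← Finset.sum_add_distrib]
      refine Finset.sum_congr rfl fun i _ => ?_
      rw [hRN]; ring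
  refine hlow.mono hhigh fun t ht => Finset.sum_le_sum fun i _ => Finset.sum_le_sum fun j _ => ?_
  split_ifs with h
  · obtain ⟨hi, hj⟩ := h
    have hq := quad_bound (V t i j) ((m i j : ℂ) * T i j) (y := b i + t * b j) (by positivity)
    have hp : 0 < 1 / (1 + t) := by positivity
    have := mul_le_mul_of_nonneg_right hq hp.le
    refine le_trans (le_of_eq ?_) this
    rw [← mul_assoc (star _), Complex.re_mul_ofReal]
    ring
  · have := hb i
    have := hb j
    have := Complex.normSq_nonneg (V t i j)
    positivity

theorem lieb_entrywise_inequality {n : ℕ}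
    (A C : Matrix (Fin n) (Fin n) ℂ) (hA : A.PosDef) (hC : C.IsHermitian)
    (T R : Matrix (Fin n) (Fin n) ℂ)
    (hT : T = Matrix.of fun a b =>
      ∫ τ in Set.Ioi (0 : ℝ),
        ((A + (τ : ℂ) • 1)⁻¹ * C * (A + (τ : ℂ) • 1)⁻¹) a b)
    (hR : R = Matrix.of fun a b =>
      2 * ∫ τ in Set.Ioi (0 : ℝ),
        ((A + (τ : ℂ) • 1)⁻¹ * C * (A + (τ : ℂ) • 1)⁻¹ * C * (A + (τ : ℂ) • 1)⁻¹) a b)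
    (b : Fin n → ℝ) (hb : ∀ i, 0 ≤ b i) :
    ∫ s in (0 : ℝ)..1,
        ∑ i, ∑ j, (T i j * T j i).re * (b j ^ s) * (b i ^ (1 - s))
      ≤ ∑ i, (R i i).re * b i := by
  obtain ⟨U, a, hU, hU', ha, hAU⟩ : ∃ (U : Matrix (Fin n) (Fin n) ℂ) (a : Fin n → ℝ),
      Uᴴ * U = 1 ∧ U * Uᴴ = 1 ∧ (∀ i, 0 < a i) ∧
        A = U * Matrix.diagonal (fun i => (a i : ℂ)) * Uᴴ := by
    refine ⟨hA.1.eigenvectorUnitary, hA.1.eigenvalues, ?_, ?_, hA.eigenvalues_pos, ?_⟩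
    · exact Unitary.coe_star_mul_self hA.1.eigenvectorUnitary
    · exact Unitary.coe_mul_star_self hA.1.eigenvectorUnitary
    · have := hA.1.spectral_theorem
      rw [Unitary.conjStarAlgAut_apply] at this
      exact this
  have hUs : ∀ X Y : Matrix (Fin n) (Fin n) ℂ, (U * X * Uᴴ) * (U * Y * Uᴴ) = U * (X * Y) * Uᴴ := by
    intro X Y
    calc (U * X * Uᴴ) * (U * Y * Uᴴ) = U * X * (Uᴴ * U) * Y * Uᴴ := by
          simp only [Matrix.mul_assoc]
      _ = _ := by rw [hU]; simp only [Matrix.mul_assoc, Matrix.one_mul]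
  set Cp := Uᴴ * C * U with hCp
  have hCU : C = U * Cp * Uᴴ := by
    calc C = (U * Uᴴ) * C * (U * Uᴴ) := by rw [hU']; simp
      _ = _ := by simp only [hCp, Matrix.mul_assoc]
  have hCph : Cpᴴ = Cp := by
    simp only [hCp, Matrix.conjTranspose_mul, Matrix.conjTranspose_conjTranspose, hC.eq,
      Matrix.mul_assoc]
  have hinv : ∀ τ : ℝ, 0 < τ → (A + (τ : ℂ) • 1)⁻¹ =
      U * Matrix.diagonal (fun i => ((1 / (a i + τ) : ℝ) : ℂ)) * Uᴴ := by
    intro τ hτ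
    apply Matrix.inv_eq_right_inv
    have e : A + (τ : ℂ) • 1 = U * Matrix.diagonal (fun i => ((a i + τ : ℝ) : ℂ)) * Uᴴ := by
      have : Matrix.diagonal (fun i => ((a i + τ : ℝ) : ℂ)) =
          Matrix.diagonal (fun i => (a i : ℂ)) + (τ : ℂ) • (1 : Matrix (Fin n) (Fin n) ℂ) := by
        rw [Matrix.smul_one_eq_diagonal, Matrix.diagonal_add]
        simp
      rw [this, Matrix.mul_add, Matrix.add_mul, ← hAU]
      simp [hU']
    rw [e, hUs, Matrix.diagonal_mul_diagonal]
    have : (fun i => ((a i + τ : ℝ) : ℂ) * ((1 / (a i + τ) : ℝ) : ℂ)) = fun _ => 1 := by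
      funext i
      rw [← Complex.ofReal_mul, mul_one_div_cancel (by have := ha i; positivity)]
      simp
    rw [this, Matrix.diagonal_one, Matrix.mul_one, hU']
  refine lieb_core U Cp hU hCph a ha T R ?_ ?_ b hb
  · rw [hT]
    ext i j
    rw [Matrix.of_apply]
    refine HI.congr (HI_conj U (M := fun t => Matrix.of fun k l => Cp k l *
      ((1 / ((a k + t) * (a l + t)) : ℝ) : ℂ)) (fun k l => ?_) i j) (fun t ht => ?_) rfl |>.2
    · exact ((HI_P (ha k) (ha l)).ofReal).const_mul _
    · rw [hinv t ht, hCU, hUs, hUs]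
      refine congrArg (fun M : Matrix (Fin n) (Fin n) ℂ => (U * M * Uᴴ) i j) (Matrix.ext fun k l => ?_)
      rw [Matrix.mul_diagonal, Matrix.diagonal_mul, Matrix.of_apply, ← one_div_mul_one_div]
      push_cast; ring
  · rw [hR]
    ext i j
    rw [Matrix.of_apply, Matrix.smul_apply, smul_eq_mul]
    congr 1
    refine HI.congr (HI_conj U (M := fun t => Matrix.of fun k m => ∑ l, (Cp k l * Cp l m) *
      ((1 / ((a k + t) * (a l + t) * (a m + t)) : ℝ) : ℂ)) (fun k m => ?_) i j)
      (fun t ht => ?_) rfl |>.2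
    · exact HI.sum (s := Finset.univ) fun l => HI.const_mul (Cp k l * Cp l m)
        ((HI_Q (ha k) (ha l) (ha m)).ofReal)
    · rw [hinv t ht, hCU, hUs, hUs, hUs, hUs]
      refine congrArg (fun M : Matrix (Fin n) (Fin n) ℂ => (U * M * Uᴴ) i j) (Matrix.ext fun k m => ?_)
      rw [Matrix.mul_diagonal, Matrix.mul_apply, Matrix.of_apply, Finset.sum_mul]
      refine Finset.sum_congr rfl fun l _ => ?_
      rw [Matrix.mul_diagonal, Matrix.diagonal_mul, ← one_div_mul_one_div, ← one_div_mul_one_div]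
      push_cast; ring
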